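/- arXiv:1408.2987 — 7 statements merged into one kernel-verified Lean document; each statement's English description precedes it below -/
import Mathlib

section
/- For every integer k ≥ 2, the number of monoid homomorphisms f from the multiplicative monoid (ℕ, +) (i.e. Multiplicative ℕ) to the monoid with zero WithZero (Multiplicative (ℚ/ℤ)), where ℚ/ℤ is realized as AddCircle (1 : ℚ), satisfying (f x)^k = f x for all x, is exactly k. Equivalently, the k-th Frobenius acting on the ℚ/ℤ-points of the affine line over F₁ has exactly k fixed points. -/
/-!
A homomorphism out of `Multiplicative ℕ` is determined by the image `z` of the generator, and it is
fixed by the Frobenius exactly when `z ^ k = z`. Either `z = 0`, or `z` is a unit, and cancelling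
`z` turns the equation into `(k - 1) • z = 0` in the additive circle. The `n`-torsion of the circle
is the cyclic group generated by the class of `1 / n`, so it has `n` elements; the total is
`1 + (k - 1) = k`.
-/

theorem card_torsion_addCircle_rat (n : ℕ) (hn : 0 < n) :
    Nat.card {u : AddCircle (1 : ℚ) // n • u = 0} = n := by
  have : Fact ((0 : ℚ) < 1) := ⟨one_pos⟩
  have h := AddCircle.addOrderOf_period_div (p := (1 : ℚ)) hn
  rw [← Nat.card_zmultiples] at h
  refine (Nat.card_congr (Equiv.subtypeEquivRight fun u => ?_)).trans h
  constructor
  · intro hu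
    obtain ⟨m, -, hm⟩ := (AddCircle.nsmul_eq_zero_iff hn).1 hu
    refine AddSubgroup.mem_zmultiples_iff.2 ⟨m, ?_⟩
    rw [← hm, natCast_zsmul, ← AddCircle.coe_nsmul, nsmul_eq_mul]
    congr 1
    ring
  · intro hu
    obtain ⟨m, rfl⟩ := AddSubgroup.mem_zmultiples_iff.1 hu
    have h0 := addOrderOf_nsmul_eq_zero (((1 : ℚ) / n : ℚ) : AddCircle (1 : ℚ))
    rw [AddCircle.addOrderOf_period_div hn] at h0
    rw [smul_comm, h0, smul_zero]

/-- Evaluation at the generator identifies the Frobenius-fixed `M`-points of the affine line with the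
solutions of `z ^ k = z` in `M`: the condition at the generator implies it at all its powers. -/
def fixedPointsEquiv (M : Type*) [CommMonoid M] (k : ℕ) :
    {f : Multiplicative ℕ →* M // ∀ x, (f x) ^ k = f x} ≃ {z : M // z ^ k = z} :=
  ((powersHom M).subtypeEquiv fun z => by
    constructor
    · intro h x
      rw [powersHom_apply, pow_right_comm, h]
    · intro h
      simpa using h (Multiplicative.ofAdd 1)).symm

/-- The fixed points of `z ↦ z ^ (n + 1)` are the adjoined zero, encoded as `none`, and the
`n`-torsion of `A`. -/
def powFixedEquiv (A : Type*) [AddCommGroup A] (n : ℕ) :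
    {z : WithZero (Multiplicative A) // z ^ (n + 1) = z} ≃ Option {u : A // n • u = 0} where
  toFun z := match z with
    | ⟨none, _⟩ => none
    | ⟨some a, h⟩ => some ⟨a.toAdd, by
        have h' : (a : WithZero (Multiplicative A)) ^ (n + 1) = a := h
        rw [← WithZero.coe_pow, WithZero.coe_inj, pow_succ, mul_eq_right] at h'
        exact congrArg Multiplicative.toAdd h'⟩
  invFun o := match o with
    | none => ⟨0, zero_pow n.succ_ne_zero⟩
    | some u => ⟨((Multiplicative.ofAdd u.1 : Multiplicative A) : WithZero (Multiplicative A)), by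
        rw [← WithZero.coe_pow, WithZero.coe_inj, pow_succ, mul_eq_right, ← ofAdd_nsmul, u.2,
          ofAdd_zero]⟩
  left_inv z := by
    rcases z with ⟨_ | a, h⟩ <;> rfl
  right_inv o := by
    rcases o with _ | u <;> rfl

/-- The `k`-th Frobenius acting on the `ℚ/ℤ`-points of the affine line over `F₁` has
exactly `k` fixed points: for `k ≥ 2`, the number of monoid homomorphisms
`f : Multiplicative ℕ →* WithZero (Multiplicative (ℚ/ℤ))` with `(f x)^k = f x` for all
`x` is exactly `k`. -/
theorem card_frobenius_fixed_points_affine_line_F1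
    (k : ℕ) (hk : 2 ≤ k) :
    Nat.card {f : Multiplicative ℕ →* WithZero (Multiplicative (AddCircle (1 : ℚ))) //
      ∀ x, (f x) ^ k = f x} = k := by
  obtain ⟨n, rfl⟩ : ∃ n, k = n + 1 := ⟨k - 1, by omega⟩
  have hn : 0 < n := by omega
  have ht := card_torsion_addCircle_rat n hn
  have : Finite {u : AddCircle (1 : ℚ) // n • u = 0} :=
    Nat.finite_of_card_ne_zero (by omega)
  rw [Nat.card_congr ((fixedPointsEquiv _ _).trans (powFixedEquiv _ n)), Finite.card_option, ht]
end

section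
/- Let f ∈ ℤ[X] be a monic polynomial such that for every integer k ≥ 1, f divides Polynomial.expand ℤ k f (i.e. the principal ideal (f) is stable under all Adams operations). Then every complex root a of f (aeval a f = 0) satisfies a = 0 or a is a root of unity (there exists n ≥ 1 with a^n = 1). -/
open Polynomial

/-!
Evaluating `f ∣ expand ℤ k f` at a root `a` shows that `a ^ k` is again a root of `f`. A nonzero
polynomial has finitely many roots, so two powers `a ^ m`, `a ^ n` with `m < n` coincide; if
`a ≠ 0`, cancelling `a ^ m` gives `a ^ (n - m) = 1`.
-/

/-- Lemma 3.1 (first assertion): if `f ∈ ℤ[X]` is monic and the principal ideal `(f)`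
is stable under all Adams operations (i.e. `f ∣ expand ℤ k f` for all `k ≥ 1`), then
every complex root of `f` is `0` or a root of unity. -/
theorem monic_adams_stable_roots_zero_or_rootOfUnity
    (f : Polynomial ℤ) (hmonic : f.Monic)
    (hstab : ∀ k : ℕ, 1 ≤ k → f ∣ Polynomial.expand ℤ k f)
    (a : ℂ) (ha : Polynomial.aeval a f = 0) :
    a = 0 ∨ ∃ n : ℕ, 1 ≤ n ∧ a ^ n = 1 := by
  refine or_iff_not_imp_left.mpr fun ha0 => ?_
  have hroot (k : ℕ) : a ^ (k + 1) ∈ f.rootSet ℂ := by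
    rw [hmonic.mem_rootSet, ← expand_aeval]
    exact aeval_eq_zero_of_dvd_aeval_eq_zero (hstab (k + 1) k.succ_pos) ha
  obtain ⟨m, n, hmn, h⟩ := (f.rootSet_finite ℂ).exists_lt_map_eq_of_forall_mem hroot
  refine ⟨n - m, by omega, ?_⟩
  apply mul_left_cancel₀ (pow_ne_zero (m + 1) ha0)
  rw [← pow_add, mul_one, show m + 1 + (n - m) = n + 1 by omega]
  exact h.symm
end

section
/- Let f ∈ ℤ[X] be a monic polynomial such that for every integer k ≥ 1, f divides Polynomial.expand ℤ k f. If ζ ∈ ℂ is a primitive n-th root of unity (IsPrimitiveRoot ζ n with n ≥ 1) and ζ is a root of f (aeval ζ f = 0), then the polynomial X^n − 1 divides f in ℤ[X]; in particular n ≤ natDegree f. -/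
/-!
Divisibility of `f(X ^ k)` by `f` implies that the complex roots of `f` are closed under taking
positive powers. Starting from a primitive `n`-th root of unity this produces all `n`-th roots of
unity, which are the simple roots of `X ^ n - 1`; hence `X ^ n - 1` divides `f` over `ℂ`, and
over `ℤ` because it is monic.
-/

open Polynomial

/-- Lemma 3.1 (second assertion): if `f ∈ ℤ[X]` is monic, the principal ideal `(f)` is
stable under all Adams operations, and `ζ` is a primitive `n`-th root of unity which is a
root of `f`, then `X^n - 1` divides `f` in `ℤ[X]`; in particular `n ≤ deg f`. -/
theorem monic_adams_stable_primitiveRoot_dvd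
    (f : Polynomial ℤ) (hmonic : f.Monic)
    (hstab : ∀ k : ℕ, 1 ≤ k → f ∣ Polynomial.expand ℤ k f)
    (n : ℕ) (hn : 1 ≤ n) (ζ : ℂ) (hζ : IsPrimitiveRoot ζ n)
    (hroot : Polynomial.aeval ζ f = 0) :
    ((X : Polynomial ℤ) ^ n - 1) ∣ f ∧ n ≤ f.natDegree := by
  -- Stability under `ψ^k` makes the root set of `f` closed under `z ↦ z^k`, so every
  -- positive power of `ζ`,
  -- i.e. every `n`-th root of unity, is a root of `f`.
  have hpow (k : ℕ) (hk : 1 ≤ k) : aeval (ζ ^ k) f = 0 := by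
    rw [← expand_aeval]
    exact aeval_eq_zero_of_dvd_aeval_eq_zero (hstab k hk) hroot
  have hall (z : ℂ) (hz : z ^ n = 1) : aeval z f = 0 := by
    have : NeZero n := ⟨by lia⟩
    obtain ⟨i, -, rfl⟩ := hζ.eq_pow_of_pow_eq_one hz
    -- The exponent may be `0`; shifting it by `n` makes it positive.
    have h := hpow (i + n) (by lia)
    rwa [pow_add, hζ.pow_eq_one, mul_one] at h
  have hXmonic : ((X : ℤ[X]) ^ n - 1).Monic := monic_X_pow_sub_C 1 (by lia)
  -- As `X ^ n - 1` is monic, divisibility over `ℂ` descends to `ℤ`; over `ℂ` it is a product of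
  -- pairwise coprime linear factors.
  have hdvd : ((X : ℤ[X]) ^ n - 1) ∣ f := by
    rw [← map_dvd_map (Int.castRingHom ℂ) Int.cast_injective hXmonic]
    simp only [Polynomial.map_sub, Polynomial.map_pow, map_X, Polynomial.map_one]
    rw [X_pow_sub_one_eq_prod (by lia) hζ]
    refine Finset.prod_dvd_of_coprime
      (fun a _ b _ hab => pairwise_coprime_X_sub_C Function.injective_id hab) fun z hz => ?_
    rw [dvd_iff_isRoot, IsRoot.def, eval_map]
    exact hall z ((mem_nthRootsFinset (by lia) 1).1 hz)
  refine ⟨hdvd, ?_⟩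
  have h := natDegree_le_of_dvd hdvd hmonic.ne_zero
  rwa [← C_1, natDegree_X_pow_sub_C] at h
end

section
/- Let I be an ideal of ℤ such that for every x ∈ I and every integer k ≥ 1, the binomial coefficient binom(x, k) = Ring.choose x k also lies in I. Then I = (0) or I = ℤ. In other words, the λ-ring ℤ_λ has no proper nonzero Λ-ideals. -/
/-! A nonzero ideal `I` contains a positive integer `n`, and stability under `λ^n` forces
`binom(n, n) = 1 ∈ I`, so `I = ℤ`. -/


/-- The λ-ring `ℤ_λ` (with `λ^k(x) = binom(x,k) = Ring.choose x k`) has no proper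
nonzero Λ-ideals: any ideal of `ℤ` stable under all the binomial operations
`x ↦ Ring.choose x k` (`k ≥ 1`) is `(0)` or all of `ℤ`. -/
theorem lambda_ideal_int_eq_bot_or_top
    (I : Ideal ℤ)
    (h : ∀ x ∈ I, ∀ k : ℕ, 1 ≤ k → Ring.choose x k ∈ I) :
    I = ⊥ ∨ I = ⊤ := by
  by_cases hI : I = ⊥
  · exact Or.inl hI
  right
  obtain ⟨x, hx, hx0⟩ := Submodule.exists_mem_ne_zero_of_ne_bot hI
  have hn : ((x.natAbs : ℕ) : ℤ) ∈ I := by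
    rcases Int.natAbs_eq x with hx' | hx'
    · rwa [← hx']
    · rw [← neg_mem_iff, ← hx']
      exact hx
  -- For `n = |x| ≥ 1` the top operation gives `λ^n(n) = binom(n, n) = 1`.
  have h1 := h _ hn x.natAbs (Int.natAbs_pos.mpr hx0)
  rw [Ring.choose_natCast, Nat.choose_self, Nat.cast_one] at h1
  exact (Ideal.eq_top_iff_one I).mpr h1
end

section
/- Let n ≥ 1 be an integer and p a prime. Let g ∈ ℤ[C_n] = MonoidAlgebra ℤ (Multiplicative (ZMod n)) be the image of the standard generator (the element of (ofAdd (1 : ZMod n))). Then there is a ring isomorphism from the quotient (Polynomial (MonoidAlgebra ℤ (Multiplicative (ZMod n)))) ⧸ Ideal.span {X^p − C g} onto MonoidAlgebra ℤ (Multiplicative (ZMod (n·p))), which sends the residue class of X to the standard generator of(ofAdd (1 : ZMod (n·p))) and the residue class of C(of(ofAdd a)) (for a ∈ ZMod n) to of(ofAdd (p·a)) (viewing C_n inside C_{np} via a ↦ p·a). -/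
open Polynomial

/-!
The two sides have inverse ring homomorphisms because both have the evident universal property:
a ring homomorphism out of `ℤ[C_N]` is the choice of an element `m` with `m ^ N = 1`
(`zmodPowHom` followed by `MonoidAlgebra.lift`). If `T` is the generator of `C_{np}`, then
`(T ^ p) ^ n = 1`, so the generator `g` of `C_n` may be sent to `T ^ p` and `X` to `T`; this kills
`X ^ p - g`. Conversely the class `x` of `X` satisfies `x ^ (n * p) = g ^ n = 1`, so `T` may be
sent to `x`. Both composites fix the generators.
-/

/-- The homomorphism `C_N → M`, `k ↦ m ^ k`, attached to an element with `m ^ N = 1`; the exponent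
is taken to be the representative `k.val < N`. -/
def zmodPowHom {M : Type*} [Monoid M] (N : ℕ) [NeZero N] (m : M) (h : m ^ N = 1) :
    Multiplicative (ZMod N) →* M where
  toFun k := m ^ k.toAdd.val
  map_one' := by simp
  map_mul' a b := by
    rw [toAdd_mul, ZMod.val_add, ← pow_eq_pow_mod _ h, pow_add]

theorem zmodPowHom_natCast {M : Type*} [Monoid M] (N : ℕ) [NeZero N] (m : M) (h : m ^ N = 1)
    (k : ℕ) : zmodPowHom N m h (Multiplicative.ofAdd (k : ZMod N)) = m ^ k := by
  change m ^ (k : ZMod N).val = m ^ k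
  rw [ZMod.val_natCast, ← pow_eq_pow_mod _ h]

theorem zmodPowHom_generator {M : Type*} [Monoid M] (N : ℕ) [NeZero N] (m : M) (h : m ^ N = 1) :
    zmodPowHom N m h (Multiplicative.ofAdd 1) = m := by
  simpa using zmodPowHom_natCast N m h 1

theorem of_natCast_eq_pow (N k : ℕ) :
    MonoidAlgebra.of ℤ (Multiplicative (ZMod N)) (Multiplicative.ofAdd (k : ZMod N)) =
      MonoidAlgebra.of ℤ (Multiplicative (ZMod N)) (Multiplicative.ofAdd 1) ^ k := by
  rw [← map_pow, ← ofAdd_nsmul, nsmul_one]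

theorem of_generator_pow_card (N : ℕ) :
    MonoidAlgebra.of ℤ (Multiplicative (ZMod N)) (Multiplicative.ofAdd 1) ^ N = 1 := by
  rw [← of_natCast_eq_pow, ZMod.natCast_self, ofAdd_zero, map_one]

/-- Ring homomorphisms out of `ℤ[C_N]` are determined by the image of the generator. -/
theorem ringHom_ext_generator {R : Type*} [Ring R] (N : ℕ) [NeZero N]
    {f f' : MonoidAlgebra ℤ (Multiplicative (ZMod N)) →+* R}
    (h : f (MonoidAlgebra.of ℤ _ (Multiplicative.ofAdd 1)) =
      f' (MonoidAlgebra.of ℤ _ (Multiplicative.ofAdd 1))) : f = f' := by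
  refine MonoidAlgebra.ringHom_ext (fun r => ?_) (fun a => ?_)
  · exact DFunLike.congr_fun (RingHom.ext_int (f.comp MonoidAlgebra.singleOneRingHom)
      (f'.comp MonoidAlgebra.singleOneRingHom)) r
  · have ha : a = Multiplicative.ofAdd ((a.toAdd.val : ℕ) : ZMod N) := by
      rw [ZMod.natCast_zmod_val, ofAdd_toAdd]
    rw [ha]
    change f (MonoidAlgebra.of ℤ _ _) = f' (MonoidAlgebra.of ℤ _ _)
    rw [of_natCast_eq_pow, map_pow, map_pow, h]

/-- Proposition 3.4 (key computation): for `n ≥ 1` and `p` prime, adjoining a `p`-th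
root of the standard generator `g` of `C_n` to `ℤ[C_n]` yields `ℤ[C_{np}]`:
`ℤ[C_n][x]/(x^p − g) ≅ ℤ[C_{np}]`, where the class of `x` goes to the standard
generator of `C_{np}` and `C_n` embeds in `C_{np}` via `a ↦ p·a`. -/
theorem quotient_monoidAlgebra_cyclic_adjoin_root
    (n p : ℕ) (hn : 1 ≤ n) (hp : p.Prime) :
    ∃ e : (Polynomial (MonoidAlgebra ℤ (Multiplicative (ZMod n))) ⧸
        Ideal.span {(X : Polynomial (MonoidAlgebra ℤ (Multiplicative (ZMod n)))) ^ p -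
          C (MonoidAlgebra.of ℤ (Multiplicative (ZMod n)) (Multiplicative.ofAdd (1 : ZMod n)))})
        ≃+* MonoidAlgebra ℤ (Multiplicative (ZMod (n * p))),
      e (Ideal.Quotient.mk _ X) =
        MonoidAlgebra.of ℤ (Multiplicative (ZMod (n * p)))
          (Multiplicative.ofAdd (1 : ZMod (n * p))) ∧
      ∀ a : ZMod n,
        e (Ideal.Quotient.mk _
            (C (MonoidAlgebra.of ℤ (Multiplicative (ZMod n)) (Multiplicative.ofAdd a)))) =
          MonoidAlgebra.of ℤ (Multiplicative (ZMod (n * p)))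
            (Multiplicative.ofAdd ((p * a.val : ℕ) : ZMod (n * p))) := by
  have : NeZero n := ⟨by omega⟩
  have : NeZero p := ⟨hp.ne_zero⟩
  set g := MonoidAlgebra.of ℤ (Multiplicative (ZMod n)) (Multiplicative.ofAdd (1 : ZMod n))
  set T := MonoidAlgebra.of ℤ (Multiplicative (ZMod (n * p)))
    (Multiplicative.ofAdd (1 : ZMod (n * p)))
  set I := Ideal.span {(X : Polynomial (MonoidAlgebra ℤ (Multiplicative (ZMod n)))) ^ p - C g}
  have hTp : (T ^ p) ^ n = 1 := by
    rw [← pow_mul, mul_comm p n]; exact of_generator_pow_card (n * p)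
  have hx : (Ideal.Quotient.mk I X) ^ p = Ideal.Quotient.mk I (C g) := by
    rw [← map_pow, Ideal.Quotient.eq]
    exact Ideal.subset_span rfl
  have hxN : (Ideal.Quotient.mk I X) ^ (n * p) = 1 := by
    rw [mul_comm n p, pow_mul, hx, ← map_pow, ← map_pow, of_generator_pow_card, map_one, map_one]
  let ι : MonoidAlgebra ℤ (Multiplicative (ZMod n)) →+*
      MonoidAlgebra ℤ (Multiplicative (ZMod (n * p))) :=
    (MonoidAlgebra.lift ℤ _ _ (zmodPowHom n (T ^ p) hTp)).toRingHom
  have hι (a : Multiplicative (ZMod n)) :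
      ι (MonoidAlgebra.of ℤ _ a) = zmodPowHom n (T ^ p) hTp a :=
    MonoidAlgebra.lift_of _ _
  have hιg : ι g = T ^ p := (hι _).trans (zmodPowHom_generator n _ hTp)
  let φ : (Polynomial (MonoidAlgebra ℤ (Multiplicative (ZMod n))) ⧸ I) →+*
      MonoidAlgebra ℤ (Multiplicative (ZMod (n * p))) :=
    Ideal.Quotient.lift I (eval₂RingHom ι T) (by
      intro q hq
      refine (Ideal.span_le (I := RingHom.ker (eval₂RingHom ι T))).2 ?_ hq
      rintro _ rfl
      simp [RingHom.mem_ker, hιg])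
  have hφX : φ (Ideal.Quotient.mk I X) = T := eval₂_X ι T
  have hφC (r) : φ (Ideal.Quotient.mk I (C r)) = ι r := eval₂_C ι T
  let ψ : MonoidAlgebra ℤ (Multiplicative (ZMod (n * p))) →+*
      (Polynomial (MonoidAlgebra ℤ (Multiplicative (ZMod n))) ⧸ I) :=
    (MonoidAlgebra.lift ℤ _ _ (zmodPowHom (n * p) (Ideal.Quotient.mk I X) hxN)).toRingHom
  have hψT : ψ T = Ideal.Quotient.mk I X :=
    (MonoidAlgebra.lift_of _ _).trans (zmodPowHom_generator (n * p) _ hxN)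
  have hφψ : φ.comp ψ = RingHom.id _ := by
    apply ringHom_ext_generator
    change φ (ψ T) = T
    rw [hψT, hφX]
  have hψφ : ψ.comp φ = RingHom.id _ := by
    apply Ideal.Quotient.ringHom_ext
    apply Polynomial.ringHom_ext'
    · apply ringHom_ext_generator
      change ψ (φ (Ideal.Quotient.mk I (C g))) = Ideal.Quotient.mk I (C g)
      rw [hφC, hιg, map_pow, hψT, hx]
    · change ψ (φ (Ideal.Quotient.mk I X)) = Ideal.Quotient.mk I X
      rw [hφX, hψT]
  refine ⟨RingEquiv.ofRingHom φ ψ hφψ hψφ, hφX, fun a => ?_⟩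
  rw [of_natCast_eq_pow, pow_mul]
  exact (hφC _).trans (hι _)
end

section
/- Let M be a finite commutative monoid with at least two elements. Then the following are equivalent: (i) for every commutative monoid N and every monoid homomorphism f : M →* N, f is injective or f is the trivial homomorphism (f x = 1 for all x); (ii) either there is a prime p such that M is isomorphic as a monoid to the cyclic group of order p (Multiplicative (ZMod p)), or M is isomorphic as a monoid to the two-element monoid {0,1} under multiplication (the multiplicative monoid of ZMod 2). -/
/-!
The two cases of the classification are separated by whether `M` has a non-unit. In a commutative
monoid a product is a unit exactly when both factors are, so sending units to `1` and non-units to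
`0` is a homomorphism `M →* {0,1}`. If a non-unit exists, it is not trivial, hence it is injective,
and then bijective. If every element is a unit, `M` is an abelian group, and applying the hypothesis
to the projections `M →* M ⧸ H` shows that it is a simple group, hence of prime order.
Conversely, the kernel of a homomorphism out of a group of prime order is everything or trivial,
and a homomorphism out of `{0,1}` is determined by the image of `0`.
-/

/-- The characteristic function of the units, as a homomorphism to the multiplicative monoid
`{0,1}`. -/
noncomputable def unitIndicator (M : Type*) [CommMonoid M] : M →* ZMod 2 := by
  classical
  exact
  { toFun := fun x => if IsUnit x then 1 else 0
    map_one' := by simp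
    map_mul' := fun x y => by
      by_cases hx : IsUnit x <;> by_cases hy : IsUnit y <;> simp [IsUnit.mul_iff, hx, hy] }

theorem unitIndicator_of_not_isUnit {M : Type*} [CommMonoid M] {x : M} (hx : ¬ IsUnit x) :
    unitIndicator M x = 0 := by
  simp [unitIndicator, hx]

theorem mulEquiv_zmod_two_of_not_isUnit {M : Type*} [CommMonoid M]
    (hinj : Function.Injective (unitIndicator M)) {x : M} (hx : ¬ IsUnit x) :
    Nonempty (M ≃* ZMod 2) := by
  refine ⟨MulEquiv.ofBijective (unitIndicator M) ⟨hinj, fun b => ?_⟩⟩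
  have hb : b = 0 ∨ b = 1 := by revert b; decide
  rcases hb with rfl | rfl
  · exact ⟨x, unitIndicator_of_not_isUnit hx⟩
  · exact ⟨1, map_one _⟩

/-- An abelian group all of whose quotient maps are injective or trivial has no proper nontrivial
subgroup, so a finite nontrivial one is cyclic of prime order. -/
theorem mulEquiv_zmod_prime_of_quotients {G : Type*} [CommGroup G] [Finite G] [Nontrivial G]
    (h : ∀ H : Subgroup G, Function.Injective (QuotientGroup.mk' H) ∨
      ∀ x, QuotientGroup.mk' H x = 1) :
    ∃ p : ℕ, p.Prime ∧ Nonempty (G ≃* Multiplicative (ZMod p)) := by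
  have : IsSimpleGroup G := ⟨fun H _ => by
    rcases h H with hi | ht
    · left
      rw [← QuotientGroup.ker_mk' H]
      exact (MonoidHom.ker_eq_bot_iff _).2 hi
    · right
      exact (Subgroup.eq_top_iff' H).2 fun x => (QuotientGroup.eq_one_iff x).1 (ht x)⟩
  have hp : (Nat.card G).Prime := IsSimpleGroup.prime_card
  have := Fact.mk hp
  exact ⟨Nat.card G, hp, ⟨mulEquivOfPrimeCardEq (p := Nat.card G) rfl (by simp)⟩⟩

theorem injective_or_trivial_of_prime_card {G N : Type*} [Group G] [Monoid N]
    (hG : (Nat.card G).Prime) (f : G →* N) : Function.Injective f ∨ ∀ x, f x = 1 := by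
  have := Fact.mk hG
  rcases f.ker.eq_bot_or_eq_top_of_prime_card with hk | hk
  · exact Or.inl ((MonoidHom.ker_eq_bot_iff f).1 hk)
  · exact Or.inr fun x => f.mem_ker.1 (hk ▸ Subgroup.mem_top x)

theorem injective_or_trivial_zmod_two {N : Type*} [Monoid N] (f : ZMod 2 →* N) :
    Function.Injective f ∨ ∀ x, f x = 1 := by
  have h01 : ∀ b : ZMod 2, b = 0 ∨ b = 1 := by decide
  by_cases h : f 0 = 1
  · right
    intro x
    rcases h01 x with rfl | rfl
    exacts [h, map_one f]
  · left
    intro x y hxy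
    rcases h01 x with rfl | rfl <;> rcases h01 y with rfl | rfl
    · rfl
    · exact absurd (hxy.trans (map_one f)) h
    · exact absurd (hxy.symm.trans (map_one f)) h
    · rfl

theorem injective_or_trivial_of_mulEquiv {M A N : Type*} [Monoid M] [Monoid A] [Monoid N]
    (e : M ≃* A) (hA : ∀ g : A →* N, Function.Injective g ∨ ∀ x, g x = 1) (f : M →* N) :
    Function.Injective f ∨ ∀ x, f x = 1 := by
  rcases hA (f.comp e.symm.toMonoidHom) with hi | ht
  · left
    intro x y hxy
    exact e.injective (hi (by simpa using hxy))
  · right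
    intro x
    simpa using ht (e x)

universe u v w

/-- If homomorphisms into monoids of one universe are injective or trivial, then so are those into
finite monoids of any other universe, since a finite monoid has an isomorphic copy in every
universe. -/
theorem injective_or_trivial_of_small {M : Type u} [CommMonoid M]
    (h : ∀ (N : Type w) [CommMonoid N] (f : M →* N), Function.Injective f ∨ ∀ x : M, f x = 1)
    {K : Type v} [CommMonoid K] [Finite K] (f : M →* K) :
    Function.Injective f ∨ ∀ x, f x = 1 := by
  let e : K ≃* Shrink.{w} K := (Shrink.mulEquiv.{w} (α := K)).symm
  rcases h (Shrink.{w} K) (e.toMonoidHom.comp f) with hi | ht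
  · exact Or.inl fun x y hxy => hi (by simp [hxy])
  · exact Or.inr fun x => by simpa using ht x

/-- Classification of the finite simple objects of the category of commutative monoids
(behind Theorem 4.2): a finite commutative monoid `M` with at least two elements has the
property that every monoid homomorphism out of `M` is injective or trivial if and only if
`M` is a cyclic group of prime order or the two-element multiplicative monoid `{0,1}`. -/
theorem finite_simple_commMonoid_iff
    (M : Type*) [CommMonoid M] [Finite M] (hM : 1 < Nat.card M) :
    (∀ (N : Type*) [CommMonoid N] (f : M →* N),
        Function.Injective f ∨ ∀ x : M, f x = 1) ↔
      ((∃ p : ℕ, p.Prime ∧ Nonempty (M ≃* Multiplicative (ZMod p))) ∨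
        Nonempty (M ≃* ZMod 2)) := by
  constructor
  · intro h
    by_cases hu : ∀ x : M, IsUnit x
    · left
      let _ : CommGroup M := commGroupOfIsUnit hu
      have : Nontrivial M := Finite.one_lt_card_iff_nontrivial.1 hM
      exact mulEquiv_zmod_prime_of_quotients fun H => injective_or_trivial_of_small h (QuotientGroup.mk' H)
    · right
      push Not at hu
      obtain ⟨x, hx⟩ := hu
      rcases injective_or_trivial_of_small h (unitIndicator M) with hi | ht
      · exact mulEquiv_zmod_two_of_not_isUnit hi hx
      · have h1 : unitIndicator M x = 1 := ht x
        rw [unitIndicator_of_not_isUnit hx] at h1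
        exact absurd h1 zero_ne_one
  · rintro (⟨p, hp, ⟨e⟩⟩ | ⟨⟨e⟩⟩) N _ f
    · exact injective_or_trivial_of_mulEquiv e
        (injective_or_trivial_of_prime_card (by rwa [Nat.card_congr Multiplicative.toAdd, Nat.card_zmod])) f
    · exact injective_or_trivial_of_mulEquiv e injective_or_trivial_zmod_two f
end

section
/- Let f ∈ ℤ[X] be a monic irreducible polynomial such that for every integer k ≥ 1, f divides Polynomial.expand ℤ k f. Then f = X or f = X − 1. -/
/-!
Let `r` be a complex root of `f`. Stability makes every power `r ^ k` with `k ≥ 1` a root of `f`,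
so, the root set being finite, two of these powers coincide. Hence `r = 0` or `r ^ n = 1` for some
`n ≥ 1`, and in the second case `1 = r ^ n` is a root of `f`. Thus `f` has the integer root `0` or
`1`, and a monic irreducible polynomial with an integer root `a` equals `X - C a`.
-/

open Polynomial

theorem eq_X_sub_C_of_monic_irreducible_of_aeval_complex {f : Polynomial ℤ} (hmonic : f.Monic)
    (hirr : Irreducible f) (a : ℤ) (h : aeval (a : ℂ) f = 0) : f = X - C a := by
  have h0 : f.IsRoot a := by
    have h1 : ((f.eval a : ℤ) : ℂ) = 0 := by
      rw [← h]
      simpa using (aeval_algebraMap_apply ℂ a f).symm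
    exact_mod_cast h1
  have hassoc : Associated (X - C a) f :=
    (irreducible_X_sub_C a).associated_of_dvd hirr (dvd_iff_isRoot.mpr h0)
  exact (eq_of_monic_of_associated (monic_X_sub_C a) hmonic hassoc).symm

/-- Core of the first step of Proposition 3.4: a monic irreducible polynomial `f ∈ ℤ[X]`
generating an Adams-stable principal ideal (`f ∣ expand ℤ k f` for all `k ≥ 1`) must be
`X` or `X - 1`. -/
theorem monic_irreducible_adams_stable_eq_X_or_X_sub_one
    (f : Polynomial ℤ) (hmonic : f.Monic) (hirr : Irreducible f)
    (hstab : ∀ k : ℕ, 1 ≤ k → f ∣ Polynomial.expand ℤ k f) :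
    f = X ∨ f = X - 1 := by
  have hdeg : f.degree ≠ 0 := fun h =>
    hirr.not_isUnit (by rw [hmonic.degree_le_zero_iff_eq_one.mp h.le]; exact isUnit_one)
  obtain ⟨r, hr⟩ := IsAlgClosed.exists_aeval_eq_zero_of_injective ℂ
    (algebraMap ℤ ℂ).injective_int f hdeg
  have hpow : ∀ k : ℕ, 1 ≤ k → aeval (r ^ k) f = 0 := by
    intro k hk
    rw [← expand_aeval]
    exact aeval_eq_zero_of_dvd_aeval_eq_zero (hstab k hk) hr
  obtain ⟨i, -, j, -, hij, heq⟩ := Set.infinite_univ.exists_ne_map_eq_of_mapsTo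
    (f := fun k : ℕ => r ^ (k + 1)) (t := f.rootSet ℂ)
    (fun k _ => (mem_rootSet.mpr ⟨hmonic.ne_zero, hpow (k + 1) (by omega)⟩)) (rootSet_finite f ℂ)
  by_cases h0 : r = 0
  · left
    simpa using eq_X_sub_C_of_monic_irreducible_of_aeval_complex hmonic hirr 0
      (by simpa [h0] using hr)
  · right
    have hone : ∃ n : ℕ, 1 ≤ n ∧ r ^ n = 1 := by
      have key : ∀ a b : ℕ, a < b → r ^ (a + 1) = r ^ (b + 1) → ∃ n : ℕ, 1 ≤ n ∧ r ^ n = 1 := by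
        intro a b hab h
        refine ⟨b - a, by omega, mul_left_cancel₀ (pow_ne_zero (a + 1) h0) ?_⟩
        rw [← pow_add, mul_one, h]
        congr 1
        omega
      rcases hij.lt_or_gt with h | h
      · exact key i j h heq
      · exact key j i h heq.symm
    obtain ⟨n, hn, hrn⟩ := hone
    simpa using eq_X_sub_C_of_monic_irreducible_of_aeval_complex hmonic hirr 1
      (by simpa [hrn] using hpow n hn)
end
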